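/- Let A ∈ ℝ^{n×d} have full column rank with condition number κ(A) = σ_max(A)/σ_min(A), let b ∈ ℝⁿ, let j ≥ 0 be an integer, and define OPT = min_{x ∈ ℝ^d} ‖A(AᵀA)^j x − b‖₂. Let ε_final ∈ (0,0.1), ε₁ ≤ ε_final/10, and ε_even ≤ ε_final/κ(A). Suppose y' ∈ ℝ^d satisfies ‖Ay' − b‖₂ ≤ (1+ε₁)·min_{y ∈ ℝ^d} ‖Ay − b‖₂ and x' ∈ ℝ^d satisfies ‖(AᵀA)^j x' − y'‖₂ ≤ ε_even ‖y'‖₂. Then ‖A(AᵀA)^j x' − b‖₂ ≤ (1+ε_final)·OPT + ε_final·‖b‖₂. -/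

import Mathlib

open Matrix
open scoped BigOperators

/-- The Euclidean (`ℓ₂`) norm of a vector in `ℝ^n`. -/
noncomputable def vnorm {n : ℕ} (v : Fin n → ℝ) : ℝ :=
  Real.sqrt (∑ i, v i ^ 2)

/-- The minimum singular value `σ_min(A) = min_{‖x‖₂ = 1} ‖Ax‖₂`. -/
noncomputable def sigmaMin {n d : ℕ} (A : Matrix (Fin n) (Fin d) ℝ) : ℝ :=
  sInf {c : ℝ | ∃ x : Fin d → ℝ, vnorm x = 1 ∧ c = vnorm (A.mulVec x)}

/-- The maximum singular value (spectral / operator norm)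
`σ_max(A) = ‖A‖ = max_{‖x‖₂ = 1} ‖Ax‖₂`. -/
noncomputable def sigmaMax {n d : ℕ} (A : Matrix (Fin n) (Fin d) ℝ) : ℝ :=
  sSup {c : ℝ | ∃ x : Fin d → ℝ, vnorm x = 1 ∧ c = vnorm (A.mulVec x)}

/-- The condition number `κ(A) = σ_max(A) / σ_min(A)`. -/
noncomputable def kappa {n d : ℕ} (A : Matrix (Fin n) (Fin d) ℝ) : ℝ :=
  sigmaMax A / sigmaMin A

/-!
Let `K` be the range of `A` and `p` the projection of `b` onto `K`, so that `m = ‖b - p‖` is the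
least-squares minimum. By Pythagoras, a point `w ∈ K` with `‖w - b‖ ≤ c * m` lies within
`√(c ^ 2 - 1) * m` of `p`, hence `‖w‖ ≤ ‖b‖ + √(c ^ 2 - 1) * m`. The even power step perturbs
`A y'` by at most `σ_max(A) * εeven * ‖y'‖ ≤ εfinal * σ_min(A) * ‖y'‖ ≤ εfinal * ‖A y'‖`, and the
bound on `‖w‖` with `w = A y'` turns this into the claimed error. Finally `m ≤ OPT`, since
`A (AᵀA)^j x` always lies in `K`.
-/

section Projection

variable {𝕜 E : Type*} [RCLike 𝕜] [NormedAddCommGroup E] [InnerProductSpace 𝕜 E]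
  {K : Submodule 𝕜 E} [K.HasOrthogonalProjection] {b v w : E} {c ε : ℝ}

theorem norm_sub_sq_eq_norm_sub_starProjection_sq_add (hw : w ∈ K) (b : E) :
    ‖w - b‖ ^ 2 = ‖w - K.starProjection b‖ ^ 2 + ‖b - K.starProjection b‖ ^ 2 := by
  have hmem : w - K.starProjection b ∈ K := K.sub_mem hw (K.starProjection_apply_mem b)
  have horth : inner 𝕜 (w - K.starProjection b) (b - K.starProjection b) = 0 :=
    K.inner_right_of_mem_orthogonal hmem (K.sub_starProjection_mem_orthogonal b)
  rw [← sub_sub_sub_cancel_right w b (K.starProjection b), norm_sub_sq (𝕜 := 𝕜), horth]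
  simp

theorem norm_sub_starProjection_le_sqrt_mul (hw : w ∈ K)
    (hwb : ‖w - b‖ ≤ c * ‖b - K.starProjection b‖) :
    ‖w - K.starProjection b‖ ≤ √(c ^ 2 - 1) * ‖b - K.starProjection b‖ := by
  have hsq : ‖w - b‖ ^ 2 ≤ (c * ‖b - K.starProjection b‖) ^ 2 := by gcongr
  calc ‖w - K.starProjection b‖
      ≤ √((c ^ 2 - 1) * ‖b - K.starProjection b‖ ^ 2) := by
        apply Real.le_sqrt_of_sq_le
        linarith [norm_sub_sq_eq_norm_sub_starProjection_sq_add hw b]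
    _ = √(c ^ 2 - 1) * ‖b - K.starProjection b‖ := by
        rw [Real.sqrt_mul' _ (sq_nonneg _), Real.sqrt_sq (norm_nonneg _)]

theorem norm_le_norm_add_sqrt_mul (hw : w ∈ K)
    (hwb : ‖w - b‖ ≤ c * ‖b - K.starProjection b‖) :
    ‖w‖ ≤ ‖b‖ + √(c ^ 2 - 1) * ‖b - K.starProjection b‖ :=
  (norm_le_norm_add_norm_sub' w (K.starProjection b)).trans <|
    add_le_add (K.norm_starProjection_apply_le b) (norm_sub_starProjection_le_sqrt_mul hw hwb)

theorem norm_sub_le_of_norm_sub_le_mul_norm (hε : 0 ≤ ε) (hw : w ∈ K)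
    (hwb : ‖w - b‖ ≤ c * ‖b - K.starProjection b‖) (hvw : ‖v - w‖ ≤ ε * ‖w‖) :
    ‖v - b‖ ≤ (c + ε * √(c ^ 2 - 1)) * ‖b - K.starProjection b‖ + ε * ‖b‖ := by
  calc ‖v - b‖
      ≤ ‖v - w‖ + ‖w - b‖ := norm_sub_le_norm_sub_add_norm_sub v w b
    _ ≤ ε * (‖b‖ + √(c ^ 2 - 1) * ‖b - K.starProjection b‖) + c * ‖b - K.starProjection b‖ := by
        have hnorm := norm_le_norm_add_sqrt_mul hw hwb
        gcongr
        exact hvw.trans (by gcongr)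
    _ = (c + ε * √(c ^ 2 - 1)) * ‖b - K.starProjection b‖ + ε * ‖b‖ := by ring

end Projection

section SingularValues

variable {n d : ℕ}

theorem vnorm_eq_norm_toLp (v : Fin n → ℝ) : vnorm v = ‖WithLp.toLp 2 v‖ := by
  simp [vnorm, EuclideanSpace.norm_eq]

theorem vnorm_nonneg (v : Fin n → ℝ) : 0 ≤ vnorm v :=
  Real.sqrt_nonneg _

theorem vnorm_smul (r : ℝ) (v : Fin n → ℝ) : vnorm (r • v) = |r| * vnorm v := by
  simp only [vnorm_eq_norm_toLp, WithLp.toLp_smul, norm_smul, Real.norm_eq_abs]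

open scoped Matrix.Norms.L2Operator in
theorem sigmaMax_eq_norm (A : Matrix (Fin n) (Fin d) ℝ) : sigmaMax A = ‖A‖ := by
  rw [Matrix.l2_opNorm_def, ← ContinuousLinearMap.sSup_sphere_eq_norm, sigmaMax]
  congr 1
  ext c
  constructor
  · rintro ⟨x, hx, rfl⟩
    rw [vnorm_eq_norm_toLp] at hx ⊢
    exact ⟨WithLp.toLp 2 x, mem_sphere_zero_iff_norm.2 hx, rfl⟩
  · rintro ⟨x, hx, rfl⟩
    refine ⟨x.ofLp, ?_, ?_⟩ <;> rw [vnorm_eq_norm_toLp]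
    · exact mem_sphere_zero_iff_norm.1 hx
    · rfl

theorem sigmaMax_nonneg (A : Matrix (Fin n) (Fin d) ℝ) : 0 ≤ sigmaMax A := by
  refine Real.sSup_nonneg ?_
  rintro _ ⟨x, -, rfl⟩
  exact vnorm_nonneg _

theorem sigmaMin_nonneg (A : Matrix (Fin n) (Fin d) ℝ) : 0 ≤ sigmaMin A := by
  refine Real.sInf_nonneg ?_
  rintro _ ⟨x, -, rfl⟩
  exact vnorm_nonneg _

theorem vnorm_mulVec_le_sigmaMax_mul (A : Matrix (Fin n) (Fin d) ℝ) (x : Fin d → ℝ) :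
    vnorm (A *ᵥ x) ≤ sigmaMax A * vnorm x := by
  rw [sigmaMax_eq_norm, vnorm_eq_norm_toLp, vnorm_eq_norm_toLp]
  exact Matrix.l2_opNorm_mulVec A (WithLp.toLp 2 x)

theorem sigmaMin_mul_le_vnorm_mulVec (A : Matrix (Fin n) (Fin d) ℝ) (x : Fin d → ℝ) :
    sigmaMin A * vnorm x ≤ vnorm (A *ᵥ x) := by
  rcases (vnorm_nonneg x).eq_or_lt with hx | hx
  · simpa [← hx] using vnorm_nonneg (A *ᵥ x)
  have habs : |(vnorm x)⁻¹| = (vnorm x)⁻¹ := abs_of_pos (inv_pos.2 hx)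
  rw [← le_div_iff₀ hx]
  refine csInf_le ⟨0, ?_⟩ ⟨(vnorm x)⁻¹ • x, ?_, ?_⟩
  · rintro _ ⟨u, -, rfl⟩
    exact vnorm_nonneg _
  · rw [vnorm_smul, habs, inv_mul_cancel₀ hx.ne']
  · rw [mulVec_smul, vnorm_smul, habs, div_eq_inv_mul]

theorem vnorm_mulVec_le_mul_vnorm_mulVec {A : Matrix (Fin n) (Fin d) ℝ} {δ ε : ℝ} (hε : 0 ≤ ε)
    (hδ : sigmaMax A * δ ≤ ε * sigmaMin A) {u y : Fin d → ℝ} (hu : vnorm u ≤ δ * vnorm y) :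
    vnorm (A *ᵥ u) ≤ ε * vnorm (A *ᵥ y) := by
  calc vnorm (A *ᵥ u)
      ≤ sigmaMax A * vnorm u := vnorm_mulVec_le_sigmaMax_mul A u
    _ ≤ sigmaMax A * (δ * vnorm y) := mul_le_mul_of_nonneg_left hu (sigmaMax_nonneg A)
    _ = sigmaMax A * δ * vnorm y := (mul_assoc _ _ _).symm
    _ ≤ ε * sigmaMin A * vnorm y := mul_le_mul_of_nonneg_right hδ (vnorm_nonneg y)
    _ = ε * (sigmaMin A * vnorm y) := mul_assoc _ _ _
    _ ≤ ε * vnorm (A *ᵥ y) := mul_le_mul_of_nonneg_left (sigmaMin_mul_le_vnorm_mulVec A y) hε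

theorem sigmaMax_mul_le_of_le_div_kappa {A : Matrix (Fin n) (Fin d) ℝ} {δ ε : ℝ} (hε : 0 ≤ ε)
    (hδ : δ ≤ ε / kappa A) : sigmaMax A * δ ≤ ε * sigmaMin A := by
  rcases (sigmaMax_nonneg A).eq_or_lt with hmax | hmax
  · simpa [← hmax] using mul_nonneg hε (sigmaMin_nonneg A)
  · rwa [kappa, div_div_eq_mul_div, le_div_iff₀' hmax] at hδ

end SingularValues

section LeastSquares

variable {n d p : ℕ}

theorem toLp_mulVec_mem_range (A : Matrix (Fin n) (Fin d) ℝ) (y : Fin d → ℝ) :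
    WithLp.toLp 2 (A *ᵥ y) ∈ LinearMap.range (toEuclideanLin A) :=
  ⟨WithLp.toLp 2 y, toLpLin_toLp 2 2 A y⟩

/-- The optimal value `min_y ‖Ay - b‖₂` of the least-squares problem for `A` and `b`. The
infimum is attained, so it is the paper's `min`. -/
noncomputable def leastSquaresMin (A : Matrix (Fin n) (Fin d) ℝ) (b : Fin n → ℝ) : ℝ :=
  sInf {c : ℝ | ∃ y : Fin d → ℝ, c = vnorm (A *ᵥ y - b)}

theorem leastSquaresMin_eq_norm_sub_starProjection (A : Matrix (Fin n) (Fin d) ℝ)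
    (b : Fin n → ℝ) :
    leastSquaresMin A b = ‖WithLp.toLp 2 b -
      (LinearMap.range (toEuclideanLin A)).starProjection (WithLp.toLp 2 b)‖ := by
  rw [Submodule.starProjection_minimal, leastSquaresMin, iInf]
  congr 1
  ext c
  constructor
  · rintro ⟨y, rfl⟩
    refine ⟨⟨_, toLp_mulVec_mem_range A y⟩, ?_⟩
    rw [vnorm_eq_norm_toLp, WithLp.toLp_sub, norm_sub_rev]
  · rintro ⟨⟨_, y, rfl⟩, rfl⟩
    refine ⟨y.ofLp, ?_⟩
    rw [vnorm_eq_norm_toLp, WithLp.toLp_sub, norm_sub_rev]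
    rfl

theorem leastSquaresMin_nonneg (A : Matrix (Fin n) (Fin d) ℝ) (b : Fin n → ℝ) :
    0 ≤ leastSquaresMin A b :=
  leastSquaresMin_eq_norm_sub_starProjection A b ▸ norm_nonneg _

theorem leastSquaresMin_le_leastSquaresMin_mul (A : Matrix (Fin n) (Fin d) ℝ)
    (B : Matrix (Fin d) (Fin p) ℝ) (b : Fin n → ℝ) :
    leastSquaresMin A b ≤ leastSquaresMin (A * B) b := by
  refine csInf_le_csInf ⟨0, ?_⟩ ⟨_, 0, rfl⟩ ?_
  · rintro _ ⟨y, rfl⟩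
    exact vnorm_nonneg _
  · rintro _ ⟨x, rfl⟩
    exact ⟨B *ᵥ x, by rw [mulVec_mulVec]⟩

theorem vnorm_mul_mulVec_sub_le (A : Matrix (Fin n) (Fin d) ℝ) (B : Matrix (Fin d) (Fin p) ℝ)
    (b : Fin n → ℝ) {c δ ε : ℝ} (hε : 0 ≤ ε) (hδ : sigmaMax A * δ ≤ ε * sigmaMin A)
    {y : Fin d → ℝ} {x : Fin p → ℝ} (hy : vnorm (A *ᵥ y - b) ≤ c * leastSquaresMin A b)
    (hx : vnorm (B *ᵥ x - y) ≤ δ * vnorm y) :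
    vnorm ((A * B) *ᵥ x - b)
      ≤ (c + ε * √(c ^ 2 - 1)) * leastSquaresMin A b + ε * vnorm b := by
  have hAx : vnorm ((A * B) *ᵥ x - A *ᵥ y) ≤ ε * vnorm (A *ᵥ y) := by
    rw [← mulVec_mulVec, ← mulVec_sub]
    exact vnorm_mulVec_le_mul_vnorm_mulVec hε hδ hx
  simp only [vnorm_eq_norm_toLp, WithLp.toLp_sub, leastSquaresMin_eq_norm_sub_starProjection]
    at hy hAx ⊢
  exact norm_sub_le_of_norm_sub_le_mul_norm hε (toLp_mulVec_mem_range A y) hy hAx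

end LeastSquares

theorem odd_power_regression_error_general {n d p : ℕ} (A : Matrix (Fin n) (Fin d) ℝ)
    (B : Matrix (Fin d) (Fin p) ℝ) (b : Fin n → ℝ) {ε₁ εeven εfinal : ℝ}
    (hεfinal : εfinal ∈ Set.Icc (0 : ℝ) 3) (hε₁ : ε₁ ≤ εfinal / 10)
    (hεeven : sigmaMax A * εeven ≤ εfinal * sigmaMin A) {y' : Fin d → ℝ} {x' : Fin p → ℝ}
    (hy : vnorm (A *ᵥ y' - b) ≤ (1 + ε₁) * leastSquaresMin A b)
    (hx : vnorm (B *ᵥ x' - y') ≤ εeven * vnorm y') :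
    vnorm ((A * B) *ᵥ x' - b) ≤ (1 + εfinal) * leastSquaresMin (A * B) b + εfinal * vnorm b := by
  obtain ⟨hε0, hε3⟩ := hεfinal
  have hmin := leastSquaresMin_nonneg A b
  have hy' : vnorm (A *ᵥ y' - b) ≤ (1 + εfinal / 10) * leastSquaresMin A b :=
    hy.trans (by gcongr)
  -- The first solve uses `1 / 10` of the budget `εfinal`, leaving `9 / 10` for the square root.
  have hsqrt : √((1 + εfinal / 10) ^ 2 - 1) ≤ 9 / 10 :=
    Real.sqrt_le_iff.2 ⟨by norm_num, by nlinarith⟩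
  have hfactor : 1 + εfinal / 10 + εfinal * √((1 + εfinal / 10) ^ 2 - 1) ≤ 1 + εfinal := by
    linarith [mul_le_mul_of_nonneg_left hsqrt hε0]
  calc vnorm ((A * B) *ᵥ x' - b)
      ≤ (1 + εfinal / 10 + εfinal * √((1 + εfinal / 10) ^ 2 - 1)) * leastSquaresMin A b
          + εfinal * vnorm b := vnorm_mul_mulVec_sub_le A B b hε0 hεeven hy' hx
    _ ≤ (1 + εfinal) * leastSquaresMin (A * B) b + εfinal * vnorm b := by
        gcongr
        exact leastSquaresMin_le_leastSquaresMin_mul A B b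

/-- Error guarantee for the odd power regression
`min_x ‖A(AᵀA)^j x - b‖₂`, solved by first approximately solving `min_y ‖Ay - b‖₂`
(giving `y'`) and then the even power regression `min_x ‖(AᵀA)^j x - y'‖₂` (giving `x'`). -/
theorem odd_power_regression_error {n d : ℕ} (A : Matrix (Fin n) (Fin d) ℝ)
    (hrank : A.rank = d) (b : Fin n → ℝ) (j : ℕ)
    (ε₁ εeven εfinal : ℝ) (hεfinal : εfinal ∈ Set.Ioo (0 : ℝ) 0.1)
    (hε₁ : ε₁ ≤ εfinal / 10) (hεeven : εeven ≤ εfinal / kappa A)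
    (y' x' : Fin d → ℝ)
    (hy : vnorm (A.mulVec y' - b)
        ≤ (1 + ε₁) * sInf {c : ℝ | ∃ y : Fin d → ℝ, c = vnorm (A.mulVec y - b)})
    (hx : vnorm (((Aᵀ * A) ^ j).mulVec x' - y') ≤ εeven * vnorm y') :
    vnorm ((A * (Aᵀ * A) ^ j).mulVec x' - b)
      ≤ (1 + εfinal)
          * sInf {c : ℝ | ∃ x : Fin d → ℝ, c = vnorm ((A * (Aᵀ * A) ^ j).mulVec x - b)}
        + εfinal * vnorm b :=
  odd_power_regression_error_general A ((Aᵀ * A) ^ j) b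
    ⟨hεfinal.1.le, hεfinal.2.le.trans (by norm_num)⟩ hε₁
    (sigmaMax_mul_le_of_le_div_kappa hεfinal.1.le hεeven) hy hx
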